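/- The set of parameters s ∈ [√2,2] such that for every L > 0 and every α ∈ (0,1) the tent map f_s does not have standard shadowing with accuracy σ(ε) = L·ε^α has full Lebesgue measure in [√2,2] (its complement in [√2,2] has Lebesgue measure zero). (First part of the paper's Theorem F.) -/

import Mathlib

open Set MeasureTheory

/-- The tent map with slope `s`, extended to all of ℝ. -/
noncomputable def tentMap (s x : ℝ) : ℝ := if x ≤ 1 / 2 then s * x else s * (1 - x)

/-- The tent map `f_s` has standard shadowing on [0,1] with accuracy σ. -/
def TentHasShadowingWithAccuracy (s : ℝ) (σ : ℝ → ℝ) : Prop :=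
  ∃ ε₀ > (0 : ℝ), ∀ ε ∈ Ioo (0 : ℝ) ε₀, ∀ x : ℕ → ℝ,
    (∀ k : ℕ, x k ∈ Icc (0 : ℝ) 1) →
    (∀ k : ℕ, |tentMap s (x k) - x (k + 1)| ≤ ε) →
    ∃ p ∈ Icc (0 : ℝ) 1, ∀ k : ℕ, |x k - (tentMap s)^[k] p| < σ ε

/-!
A pseudotrajectory that leaves the critical point and lands at distance `ε` above the critical value
`s / 2` can only be shadowed by an orbit starting, one step later, at distance at least `ε` from it.
The two orbits separate by a factor `s` at each step until the critical point falls between them.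
While `s ^ k * ε` is smaller than the accuracy `L * ε ^ α`, both orbits follow the critical orbit,
so if the latter does not return exponentially close to the critical point, no folding occurs and
the distance reaches `L * ε ^ α`.

It remains to see that the critical orbit recurs slowly for almost every parameter. In the
coordinate `critOrbit` its `n`-th point moves at speed at least `c * a ^ n` with the parameter
`s ≥ a > √2`, as long as the itinerary is constant, and at speed at most `C * b ^ n` for `s ≤ b`. By
the upper bound, a short parameter interval of constant itinerary is cut at most once in three
steps, and `2 < b ^ 3` keeps the number of parameter intervals of order `n` effectively `O(b ^ n)`.
Hence the `n`-th point is `r`-close to the critical point on a parameter set of measure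
`O(r * (b / a) ^ n)`, and Borel–Cantelli applies to `r = ρ ^ n` once `ρ * b < a`.
-/

open Filter Topology

theorem abs_abs_sub_abs_of_mul_nonneg {x y : ℝ} (h : 0 ≤ x * y) : |(|x| - |y|)| = |x - y| := by
  rcases mul_nonneg_iff.1 h with ⟨hx, hy⟩ | ⟨hx, hy⟩
  · rw [abs_of_nonneg hx, abs_of_nonneg hy]
  · rw [abs_of_nonpos hx, abs_of_nonpos hy, neg_sub_neg, abs_sub_comm]

theorem mul_nonneg_of_abs_sub_le_abs {x y : ℝ} (h : |x - y| ≤ |x|) : 0 ≤ x * y := by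
  nlinarith [sq_le_sq.2 h, sq_nonneg y]

theorem seven_fifths_lt_sqrt_two : 7 / 5 < √2 :=
  Real.lt_sqrt_of_sq_lt (by norm_num)

theorem one_lt_of_sqrt_two_lt {a : ℝ} (ha : √2 < a) : 1 < a :=
  Real.one_lt_sqrt_two.trans ha

theorem two_lt_sq_of_sqrt_two_lt {a : ℝ} (ha : √2 < a) : 2 < a ^ 2 :=
  (Real.sqrt_lt' (by linarith [one_lt_of_sqrt_two_lt ha])).1 ha

theorem sq_sub_two_mul_pow_pos {a : ℝ} (ha : √2 < a) (m : ℕ) : 0 < (a ^ 2 - 2) * a ^ m :=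
  mul_pos (sub_pos.2 (two_lt_sq_of_sqrt_two_lt ha))
    (pow_pos (zero_lt_one.trans (one_lt_of_sqrt_two_lt ha)) m)

theorem eventually_forall_le_of_pow_le {δ τ : ℕ → ℝ} {ρ : ℝ} (hρ : ρ ∈ Icc (0 : ℝ) 1)
    (hδ : ∀ n, 1 ≤ n → 0 < δ n) (hρδ : ∀ᶠ n in atTop, ρ ^ n ≤ δ n)
    (hτ : Tendsto τ atTop (𝓝 0)) (hτρ : ∀ᶠ n in atTop, τ n ≤ ρ ^ n) :
    ∀ᶠ N in atTop, ∀ n ∈ Icc 1 N, τ N ≤ δ n := by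
  obtain ⟨m, hm⟩ := eventually_atTop.1 hρδ
  have early : ∀ᶠ N in atTop, ∀ n ∈ Ico 1 m, τ N ≤ δ n :=
    (eventually_all_finite (finite_Ico 1 m)).2 fun n hn => hτ.eventually_le_const (hδ n hn.1)
  filter_upwards [early, hτρ] with N hearly hlate n hn
  rcases lt_or_ge n m with hnm | hnm
  · exact hearly n ⟨hn.1, hnm⟩
  · exact hlate.trans ((pow_le_pow_of_le_one hρ.1 hρ.2 hn.2).trans (hm n hnm))

section Shadowing

variable {s : ℝ}

theorem tentMap_eq (s x : ℝ) : tentMap s x = s / 2 - s * |x - 1 / 2| := by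
  unfold tentMap
  split_ifs with h
  · rw [abs_of_nonpos (by linarith)]; ring
  · rw [abs_of_nonneg (by linarith)]; ring

theorem tentMap_half (s : ℝ) : tentMap s (1 / 2) = s / 2 := by simp [tentMap_eq]

theorem tentMap_le (hs : 0 ≤ s) (x : ℝ) : tentMap s x ≤ s / 2 := by
  rw [tentMap_eq]
  exact sub_le_self _ (by positivity)

theorem mapsTo_tentMap_Icc (hs₀ : 0 ≤ s) (hs₂ : s ≤ 2) :
    MapsTo (tentMap s) (Icc 0 1) (Icc 0 1) := by
  rintro x ⟨hx₀, hx₁⟩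
  have hdist : |x - 1 / 2| ≤ 1 / 2 := abs_le.2 ⟨by linarith, by linarith⟩
  exact ⟨by rw [tentMap_eq]; nlinarith, (tentMap_le hs₀ x).trans (by linarith)⟩

theorem abs_tentMap_sub (hs : 0 ≤ s) (x y : ℝ) :
    |tentMap s x - tentMap s y| = s * |(|x - 1 / 2| - |y - 1 / 2|)| := by
  rw [tentMap_eq, tentMap_eq, sub_sub_sub_cancel_left, ← mul_sub, abs_mul, abs_of_nonneg hs,
    abs_sub_comm]

theorem abs_iterate_tentMap_sub_le (hs : 0 ≤ s) (x y : ℝ) (k : ℕ) :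
    |(tentMap s)^[k] x - (tentMap s)^[k] y| ≤ s ^ k * |x - y| := by
  induction k with
  | zero => simp
  | succ k ih =>
    rw [Function.iterate_succ_apply', Function.iterate_succ_apply', abs_tentMap_sub hs, pow_succ',
      mul_assoc]
    refine mul_le_mul_of_nonneg_left ((abs_abs_sub_abs_le_abs_sub _ _).trans ?_) hs
    rwa [sub_sub_sub_cancel_right]

theorem abs_iterate_tentMap_sub_eq (hs : 0 ≤ s) {x y : ℝ} {n : ℕ}
    (h : ∀ k < n, |(tentMap s)^[k] x - (tentMap s)^[k] y| ≤ |(tentMap s)^[k] x - 1 / 2|) :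
    |(tentMap s)^[n] x - (tentMap s)^[n] y| = s ^ n * |x - y| := by
  induction n with
  | zero => simp
  | succ n ih =>
    have same_side := mul_nonneg_of_abs_sub_le_abs
      (x := (tentMap s)^[n] x - 1 / 2) (y := (tentMap s)^[n] y - 1 / 2)
      (by rw [sub_sub_sub_cancel_right]; exact h n n.lt_succ_self)
    rw [Function.iterate_succ_apply', Function.iterate_succ_apply', abs_tentMap_sub hs,
      abs_abs_sub_abs_of_mul_nonneg same_side, sub_sub_sub_cancel_right,
      ih fun k hk => h k (hk.trans n.lt_succ_self), pow_succ', mul_assoc]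

/-- The pseudotrajectory that starts at the critical point, lands at distance `ε` above the
critical value, which no true orbit can reach, and follows the tent map from there. -/
noncomputable def jumpOrbit (s ε : ℝ) : ℕ → ℝ
  | 0 => 1 / 2
  | k + 1 => (tentMap s)^[k] (s / 2 + ε)

theorem jumpOrbit_mem_Icc {ε : ℝ} (hs : 0 ≤ s) (hε : 0 ≤ ε) (hsε : s / 2 + ε ≤ 1) (k : ℕ) :
    jumpOrbit s ε k ∈ Icc (0 : ℝ) 1 := by
  cases k with
  | zero => norm_num [jumpOrbit]
  | succ k => exact (mapsTo_tentMap_Icc hs (by linarith)).iterate k ⟨by positivity, hsε⟩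

theorem abs_tentMap_jumpOrbit_sub_le {ε : ℝ} (hε : 0 ≤ ε) (k : ℕ) :
    |tentMap s (jumpOrbit s ε k) - jumpOrbit s ε (k + 1)| ≤ ε := by
  cases k with
  | zero => simp [jumpOrbit, tentMap_eq, abs_of_nonneg hε]
  | succ k => simpa [jumpOrbit, ← Function.iterate_succ_apply'] using hε

theorem exists_le_abs_jumpOrbit_sub_iterate {ε σ : ℝ} (hs : 1 < s) (hε : 0 < ε)
    (hfar : ∀ k, s ^ k * ε < σ → 2 * σ ≤ |(tentMap s)^[k + 1] (1 / 2) - 1 / 2|) (p : ℝ) :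
    ∃ k, σ ≤ |jumpOrbit s ε k - (tentMap s)^[k] p| := by
  by_contra! hp
  have hs₀ : 0 ≤ s := by linarith
  have hclose : ∀ k, |(tentMap s)^[k] (s / 2 + ε) - (tentMap s)^[k] (tentMap s p)| < σ :=
    fun k => hp (k + 1)
  have hescape : ∃ n, σ ≤ s ^ n * ε :=
    ((tendsto_pow_atTop_atTop_of_one_lt hs).atTop_mul_const hε).eventually_ge_atTop σ |>.exists
  have hexpand := abs_iterate_tentMap_sub_eq hs₀ (x := s / 2 + ε) (y := tentMap s p)
    (n := Nat.find hescape) fun k hk => by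
      have hsmall : s ^ k * ε < σ := not_le.1 (Nat.find_min hescape hk)
      have hcrit := abs_iterate_tentMap_sub_le hs₀ (s / 2) (s / 2 + ε) k
      rw [sub_add_cancel_left, abs_neg, abs_of_pos hε] at hcrit
      have hcrit_far := hfar k hsmall
      rw [Function.iterate_succ_apply, tentMap_half] at hcrit_far
      linarith [hclose k,
        abs_sub_le ((tentMap s)^[k] (s / 2)) ((tentMap s)^[k] (s / 2 + ε)) (1 / 2)]
  have hgap : ε ≤ |s / 2 + ε - tentMap s p| :=
    le_trans (by linarith [tentMap_le hs₀ p]) (le_abs_self _)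
  refine (hclose (Nat.find hescape)).not_ge ?_
  calc σ ≤ s ^ Nat.find hescape * ε := Nat.find_spec hescape
    _ ≤ s ^ Nat.find hescape * |s / 2 + ε - tentMap s p| := by gcongr
    _ = _ := hexpand.symm

/-- Slow recurrence of the critical point: its orbit does not approach it exponentially fast.
The distances are bounded below only eventually, so that finitely many times do not matter. -/
def TentSlowlyRecurrent (s : ℝ) : Prop :=
  ∀ ρ ∈ Ioo (0 : ℝ) 1, ∀ᶠ n in atTop, ρ ^ n ≤ |(tentMap s)^[n] (1 / 2) - 1 / 2|

theorem TentSlowlyRecurrent.abs_iterate_sub_pos (h : TentSlowlyRecurrent s) {n : ℕ} (hn : 1 ≤ n) :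
    0 < |(tentMap s)^[n] (1 / 2) - 1 / 2| := by
  refine abs_pos.2 fun hzero => ?_
  have hper : Function.IsPeriodicPt (tentMap s) n (1 / 2) := sub_eq_zero.1 hzero
  obtain ⟨N, hN⟩ := eventually_atTop.1 (h (1 / 2) (by norm_num))
  have := hN (N * n) (Nat.le_mul_of_pos_right N hn)
  rw [(hper.const_mul N).eq, sub_self, abs_zero] at this
  exact this.not_gt (by positivity)

theorem TentSlowlyRecurrent.eventually_mul_pow_le (h : TentSlowlyRecurrent s) (C : ℝ) {θ : ℝ}
    (hθ : θ ∈ Ioo (0 : ℝ) 1) :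
    ∀ᶠ N in atTop, ∀ n ∈ Icc 1 N, C * θ ^ N ≤ |(tentMap s)^[n] (1 / 2) - 1 / 2| := by
  obtain ⟨ρ, hθρ, hρ₁⟩ := exists_between hθ.2
  have hρ₀ := hθ.1.trans hθρ
  have hlim : Tendsto (fun N : ℕ => C * θ ^ N) atTop (𝓝 0) := by
    simpa using (tendsto_pow_atTop_nhds_zero_of_lt_one hθ.1.le hθ.2).const_mul C
  have hratio : Tendsto (fun N : ℕ => C * (θ / ρ) ^ N) atTop (𝓝 0) := by
    simpa using (tendsto_pow_atTop_nhds_zero_of_lt_one (div_pos hθ.1 hρ₀).le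
      ((div_lt_one hρ₀).2 hθρ)).const_mul C
  refine eventually_forall_le_of_pow_le ⟨hρ₀.le, hρ₁.le⟩
    (fun n => h.abs_iterate_sub_pos) (h ρ ⟨hρ₀, hρ₁⟩) hlim ?_
  filter_upwards [hratio.eventually_le_const one_pos] with N hN
  rwa [div_pow, ← mul_div_assoc, div_le_one (by positivity)] at hN

theorem TentSlowlyRecurrent.not_tentHasShadowingWithAccuracy (h : TentSlowlyRecurrent s)
    (hs₁ : 1 < s) (hs₂ : s < 2) (L : ℝ) {α : ℝ} (hα : 0 < α) :
    ¬ TentHasShadowingWithAccuracy s (fun ε => L * ε ^ α) := by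
  rintro ⟨ε₀, hε₀, hshadow⟩
  have hs₀ : 0 < s := by linarith
  have hinv₀ : 0 < s⁻¹ := inv_pos.2 hs₀
  have hinv₁ : s⁻¹ < 1 := inv_lt_one_of_one_lt₀ hs₁
  have hθ : s⁻¹ ^ α ∈ Ioo (0 : ℝ) 1 :=
    ⟨Real.rpow_pos_of_pos hinv₀ α, Real.rpow_lt_one hinv₀.le hinv₁ hα⟩
  have hε_lim := tendsto_pow_atTop_nhds_zero_of_lt_one hinv₀.le hinv₁
  have hσ_lim := (tendsto_pow_atTop_nhds_zero_of_lt_one hθ.1.le hθ.2).const_mul L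
  rw [mul_zero] at hσ_lim
  obtain ⟨N, hεε₀, hεs, hσ₁, hfar⟩ := (hε_lim.eventually_lt_const hε₀ |>.and <|
    hε_lim.eventually_lt_const (show 0 < 1 - s / 2 by linarith) |>.and <|
    hσ_lim.eventually_lt_const one_pos |>.and (h.eventually_mul_pow_le (2 * L) hθ)).exists
  have hε : 0 < s⁻¹ ^ N := by positivity
  obtain ⟨p, -, hp⟩ := hshadow (s⁻¹ ^ N) ⟨hε, hεε₀⟩ (jumpOrbit s (s⁻¹ ^ N))
    (jumpOrbit_mem_Icc hs₀.le hε.le (by linarith)) (abs_tentMap_jumpOrbit_sub_le hε.le)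
  simp only [← Real.rpow_pow_comm hinv₀.le] at hp
  obtain ⟨k, hk⟩ := exists_le_abs_jumpOrbit_sub_iterate hs₁ hε (fun k hk => by
    have hkN : s ^ k < s ^ N := by
      have := hk.trans hσ₁
      rwa [inv_pow, ← div_eq_mul_inv, div_lt_one (by positivity)] at this
    rw [← mul_assoc]
    exact hfar (k + 1) ⟨by omega, (pow_lt_pow_iff_right₀ hs₁).1 hkN⟩) p
  exact (hp k).not_ge hk

end Shadowing

section CriticalOrbit

/-- The critical orbit in the coordinate `y` with `x = 1 / 2 + (s - 1) / 2 * y`, as a function of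
the parameter `s`. In this coordinate `f_s` is `y ↦ 1 - s * |y|` and the critical point is `0`. -/
noncomputable def critOrbit : ℕ → ℝ → ℝ
  | 0, _ => 0
  | n + 1, s => 1 - s * |critOrbit n s|

theorem critOrbit_zero (s : ℝ) : critOrbit 0 s = 0 := rfl

theorem critOrbit_succ (n : ℕ) (s : ℝ) : critOrbit (n + 1) s = 1 - s * |critOrbit n s| := rfl

theorem critOrbit_one (s : ℝ) : critOrbit 1 s = 1 := by simp [critOrbit]

theorem critOrbit_two (s : ℝ) : critOrbit 2 s = 1 - s := by simp [critOrbit]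

theorem critOrbit_three {s : ℝ} (hs : 1 ≤ s) : critOrbit 3 s = 1 - s * (s - 1) := by
  rw [critOrbit_succ, critOrbit_two, abs_of_nonpos (by linarith), neg_sub]

theorem continuous_critOrbit (n : ℕ) : Continuous (critOrbit n) := by
  induction n with
  | zero => exact continuous_const
  | succ n ih => exact continuous_const.sub (continuous_id.mul ih.abs)

theorem abs_critOrbit_le_one {s : ℝ} (hs : s ∈ Icc (0 : ℝ) 2) (n : ℕ) : |critOrbit n s| ≤ 1 := by
  induction n with
  | zero => simp [critOrbit_zero]
  | succ n ih =>
    rw [critOrbit_succ, abs_le]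
    constructor <;> nlinarith [hs.1, hs.2, abs_nonneg (critOrbit n s)]

theorem iterate_tentMap_half {s : ℝ} (hs : 1 ≤ s) (n : ℕ) :
    (tentMap s)^[n] (1 / 2) = 1 / 2 + (s - 1) / 2 * critOrbit n s := by
  induction n with
  | zero => simp [critOrbit_zero]
  | succ n ih =>
    rw [Function.iterate_succ_apply', ih, tentMap_eq, critOrbit_succ, add_sub_cancel_left, abs_mul,
      abs_of_nonneg (by linarith : 0 ≤ (s - 1) / 2)]
    ring

theorem tentSlowlyRecurrent_of_critOrbit {s : ℝ} (hs : 1 < s)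
    (h : ∀ q : ℚ, (q : ℝ) ∈ Ioo (0 : ℝ) 1 → ∀ᶠ n in atTop, (q : ℝ) ^ n ≤ |critOrbit n s|) :
    TentSlowlyRecurrent s := by
  intro ρ hρ
  obtain ⟨q, hρq, hq₁⟩ := exists_rat_btwn hρ.2
  have hq₀ := hρ.1.trans hρq
  have hs' : 0 < (s - 1) / 2 := by linarith
  have hratio := (tendsto_pow_atTop_nhds_zero_of_lt_one (div_pos hρ.1 hq₀).le
    ((div_lt_one hq₀).2 hρq)).eventually_le_const hs'
  filter_upwards [h q ⟨hq₀, hq₁⟩, hratio] with n hn hnratio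
  rw [div_pow, div_le_iff₀ (by positivity)] at hnratio
  rw [iterate_tentMap_half hs.le, add_sub_cancel_left, abs_mul, abs_of_pos hs']
  exact hnratio.trans (mul_le_mul_of_nonneg_left hn hs'.le)

theorem abs_critOrbit_succ_sub_le {b s t : ℝ} (hs : s ∈ Icc (0 : ℝ) 2) (ht : t ∈ Icc 0 b) (n : ℕ) :
    |critOrbit (n + 1) s - critOrbit (n + 1) t| ≤
      b * |critOrbit n s - critOrbit n t| + |s - t| := by
  rw [critOrbit_succ, critOrbit_succ]
  calc |1 - s * |critOrbit n s| - (1 - t * |critOrbit n t|)|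
      = |t * (|critOrbit n t| - |critOrbit n s|) + (t - s) * (|critOrbit n s|)| := by ring_nf
    _ ≤ t * |(|critOrbit n t| - |critOrbit n s|)| + |t - s| * |critOrbit n s| := by
      refine (abs_add_le _ _).trans_eq ?_
      rw [abs_mul, abs_mul, abs_of_nonneg ht.1, abs_abs]
    _ ≤ b * |critOrbit n t - critOrbit n s| + |t - s| * 1 := by
      have hlip := abs_abs_sub_abs_le_abs_sub (critOrbit n t) (critOrbit n s)
      have hone := abs_critOrbit_le_one hs n
      have hb := ht.1.trans ht.2
      exact add_le_add (mul_le_mul ht.2 hlip (abs_nonneg _) hb)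
        (mul_le_mul_of_nonneg_left hone (abs_nonneg _))
    _ = b * |critOrbit n s - critOrbit n t| + |s - t| := by
      rw [mul_one, abs_sub_comm t, abs_sub_comm (critOrbit n t)]

theorem sub_one_mul_abs_critOrbit_sub_le {b s t : ℝ} (hb : 1 ≤ b) (hs : s ∈ Icc (0 : ℝ) 2)
    (ht : t ∈ Icc 0 b) (n : ℕ) :
    (b - 1) * |critOrbit n s - critOrbit n t| ≤ (b ^ n - 1) * |s - t| := by
  induction n with
  | zero => simp [critOrbit_zero]
  | succ n ih =>
    have hstep := mul_le_mul_of_nonneg_left (abs_critOrbit_succ_sub_le hs ht n)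
      (sub_nonneg.2 hb)
    have := mul_le_mul_of_nonneg_left ih (by linarith : 0 ≤ b)
    rw [pow_succ']
    linarith

theorem mul_abs_critOrbit_sub_le_succ {s t : ℝ} (hs : s ∈ Icc (0 : ℝ) 2) (ht : 0 ≤ t) {n : ℕ}
    (hsign : 0 ≤ critOrbit n s * critOrbit n t) :
    t * |critOrbit n s - critOrbit n t| - |s - t| ≤
      |critOrbit (n + 1) s - critOrbit (n + 1) t| := by
  rw [critOrbit_succ, critOrbit_succ, ← abs_abs_sub_abs_of_mul_nonneg hsign]
  calc t * |(|critOrbit n s| - |critOrbit n t|)| - |s - t|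
      ≤ |t * (|critOrbit n s| - |critOrbit n t|)| - |(t - s) * (|critOrbit n s|)| := by
        rw [abs_mul, abs_mul, abs_of_nonneg ht, abs_abs, abs_sub_comm t s]
        linarith [mul_le_of_le_one_right (abs_nonneg (s - t)) (abs_critOrbit_le_one hs n)]
    _ ≤ |t * (|critOrbit n s| - |critOrbit n t|) - (t - s) * (|critOrbit n s|)| :=
        abs_sub_abs_le_abs_sub _ _
    _ = |1 - s * |critOrbit n s| - (1 - t * |critOrbit n t|)| := by
        rw [← abs_neg]; ring_nf

/-- Composing two one-step bounds would lose `s + 1` times `|s - t|`. The two error terms have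
opposite signs, since a large `|critOrbit n s|` forces `critOrbit (n + 1) s` to be negative. -/
theorem sq_mul_abs_critOrbit_sub_le_add_two {s t : ℝ} (hs : s ∈ Icc (1 : ℝ) 2) (ht : 1 ≤ t) {n : ℕ}
    (hsign : 0 ≤ critOrbit n s * critOrbit n t)
    (hsign' : 0 ≤ critOrbit (n + 1) s * critOrbit (n + 1) t) :
    t ^ 2 * |critOrbit n s - critOrbit n t| - (s + t - 1) * |s - t| ≤
      |critOrbit (n + 2) s - critOrbit (n + 2) t| := by
  have hs₀ : 0 ≤ s := by linarith [hs.1]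
  have ht₀ : 0 ≤ t := by linarith
  have herror : |(s + t) * |critOrbit n s| - 1| ≤ s + t - 1 := by
    have := abs_critOrbit_le_one ⟨hs₀, hs.2⟩ n
    rw [abs_le]
    constructor <;> nlinarith [hs.1, abs_nonneg (critOrbit n s)]
  have hsign'' : 0 ≤ (s * critOrbit (n + 1) s) * (t * critOrbit (n + 1) t) := by
    rw [mul_mul_mul_comm]; positivity
  have hlast : |critOrbit (n + 2) s - critOrbit (n + 2) t| =
      |s * critOrbit (n + 1) s - t * critOrbit (n + 1) t| := by
    rw [← abs_abs_sub_abs_of_mul_nonneg hsign'', abs_mul, abs_mul, abs_of_nonneg hs₀,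
      abs_of_nonneg ht₀, critOrbit_succ (n + 1), critOrbit_succ (n + 1), sub_sub_sub_cancel_left,
      abs_sub_comm]
  rw [hlast, critOrbit_succ, critOrbit_succ, ← abs_abs_sub_abs_of_mul_nonneg hsign]
  calc t ^ 2 * |(|critOrbit n s| - |critOrbit n t|)| - (s + t - 1) * |s - t|
      ≤ |t ^ 2 * (|critOrbit n s| - |critOrbit n t|)| -
          |(t - s) * ((s + t) * |critOrbit n s| - 1)| := by
        rw [abs_mul, abs_mul, abs_of_nonneg (sq_nonneg t), abs_sub_comm t s]
        linarith [mul_le_mul_of_nonneg_left herror (abs_nonneg (s - t))]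
    _ ≤ |t ^ 2 * (|critOrbit n s| - |critOrbit n t|) -
          (t - s) * ((s + t) * |critOrbit n s| - 1)| := abs_sub_abs_le_abs_sub _ _
    _ = |s * (1 - s * |critOrbit n s|) - t * (1 - t * |critOrbit n t|)| := by
        rw [← abs_neg]; ring_nf

section Transversality

variable {s t : ℝ}

theorem abs_critOrbit_three_sub (hs : 1 ≤ s) (ht : 1 ≤ t) :
    |critOrbit 3 s - critOrbit 3 t| = (s + t - 1) * |s - t| := by
  calc |critOrbit 3 s - critOrbit 3 t| = |(s + t - 1) * (t - s)| := by
        rw [critOrbit_three hs, critOrbit_three ht]; ring_nf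
    _ = (s + t - 1) * |s - t| := by
        rw [abs_mul, abs_of_nonneg (by linarith), abs_sub_comm]

/-- The summand `1` propagates since it makes the error term of the two-step bound cancel; the
order `3` is the first one at which the remaining coefficient `t ^ 2 - 2` is positive
for all `t > √2`. -/
theorem mul_abs_sub_le_abs_critOrbit_odd_sub (hs : s ∈ Icc (1 : ℝ) 2) (ht : 1 ≤ t) (k : ℕ)
    (hsign : ∀ i < 2 * k + 3, 0 ≤ critOrbit i s * critOrbit i t) :
    (s + t - 1) * ((t ^ 2 - 2) * t ^ (2 * k) + 1) * |s - t| ≤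
      (t ^ 2 - 1) * |critOrbit (2 * k + 3) s - critOrbit (2 * k + 3) t| := by
  induction k with
  | zero =>
    rw [mul_zero, zero_add, abs_critOrbit_three_sub hs.1 ht]
    exact le_of_eq (by ring)
  | succ k ih =>
    have ih := mul_le_mul_of_nonneg_left (ih fun i hi => hsign i (by omega)) (sq_nonneg t)
    have hstep := mul_le_mul_of_nonneg_left (sq_mul_abs_critOrbit_sub_le_add_two hs ht
      (hsign (2 * k + 3) (by omega)) (hsign (2 * k + 4) (by omega)))
      (by nlinarith : 0 ≤ t ^ 2 - 1)
    rw [show 2 * (k + 1) + 3 = 2 * k + 3 + 2 by ring, show 2 * (k + 1) = 2 * k + 2 by ring, pow_add]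
    linarith

theorem mul_abs_sub_le_abs_critOrbit_sub (hs : s ∈ Icc (1 : ℝ) 2) (ht : t ∈ Icc (1 : ℝ) 2)
    (ht' : 2 ≤ t ^ 2) (m : ℕ) (hsign : ∀ i < m + 3, 0 ≤ critOrbit i s * critOrbit i t) :
    (t ^ 2 - 2) * t ^ m * |s - t| ≤ 3 * |critOrbit (m + 3) s - critOrbit (m + 3) t| := by
  have hmain : (s + t - 1) * ((t ^ 2 - 2) * t ^ m * |s - t|) ≤
      (t ^ 2 - 1) * |critOrbit (m + 3) s - critOrbit (m + 3) t| := by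
    obtain ⟨k, rfl | rfl⟩ := m.even_or_odd'
    · have hodd := mul_abs_sub_le_abs_critOrbit_odd_sub hs ht.1 k hsign
      have : 0 ≤ (s + t - 1) * |s - t| := mul_nonneg (by linarith [hs.1, ht.1]) (abs_nonneg _)
      linarith
    · have hodd := mul_le_mul_of_nonneg_left (mul_abs_sub_le_abs_critOrbit_odd_sub hs ht.1 k
        fun i hi => hsign i (by omega)) (by linarith [ht.1] : 0 ≤ t)
      have hstep := mul_le_mul_of_nonneg_left (mul_abs_critOrbit_sub_le_succ
        ⟨by linarith [hs.1], hs.2⟩ (by linarith [ht.1]) (hsign (2 * k + 3) (by omega)))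
        (by linarith : 0 ≤ t ^ 2 - 1)
      have herror : 0 ≤ (t * (s - 1) + 1) * |s - t| :=
        mul_nonneg (by nlinarith [hs.1, ht.1]) (abs_nonneg _)
      rw [show 2 * k + 1 + 3 = 2 * k + 3 + 1 by ring, pow_succ t (2 * k)]
      linarith
  have hleft : 0 ≤ (t ^ 2 - 2) * t ^ m * |s - t| :=
    mul_nonneg (mul_nonneg (by linarith) (pow_nonneg (by linarith [ht.1]) m)) (abs_nonneg _)
  have hright : (t ^ 2 - 1) * |critOrbit (m + 3) s - critOrbit (m + 3) t| ≤
      3 * |critOrbit (m + 3) s - critOrbit (m + 3) t| :=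
    mul_le_mul_of_nonneg_right (by nlinarith [ht.1, ht.2]) (abs_nonneg _)
  nlinarith [hs.1, ht.1]

end Transversality

end CriticalOrbit

section SameSign

/-- The function `g` takes no two values of opposite signs on `J`; it may vanish there. -/
def SameSignOn {X : Type*} (g : X → ℝ) (J : Set X) : Prop := ∀ s ∈ J, ∀ t ∈ J, 0 ≤ g s * g t

theorem SameSignOn.mono {X : Type*} {g : X → ℝ} {J K : Set X} (h : SameSignOn g K) (hJK : J ⊆ K) :
    SameSignOn g J :=
  fun s hs t ht => h s (hJK hs) t (hJK ht)

theorem SameSignOn.of_abs_sub_le {X : Type*} {g : X → ℝ} {J : Set X} {w : X} (hw : g w ≠ 0)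
    (h : ∀ s ∈ J, |g w - g s| ≤ |g w|) : SameSignOn g J := by
  intro s hs t ht
  have hprod := mul_nonneg (mul_nonneg_of_abs_sub_le_abs (h s hs))
    (mul_nonneg_of_abs_sub_le_abs (h t ht))
  rw [mul_mul_mul_comm] at hprod
  exact nonneg_of_mul_nonneg_right hprod (mul_self_pos.2 hw)

theorem sameSignOn_of_forall_ne_zero {g : ℝ → ℝ} {J : Set ℝ} (hJ : IsPreconnected J)
    (hg : ContinuousOn g J) (hne : ∀ s ∈ J, g s ≠ 0) : SameSignOn g J := by
  intro s hs t ht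
  by_contra! hlt
  have hzero : (0 : ℝ) ∈ uIcc (g s) (g t) := by
    rcases mul_neg_iff.1 hlt with ⟨hs, ht⟩ | ⟨hs, ht⟩
    · exact mem_uIcc_of_ge ht.le hs.le
    · exact mem_uIcc_of_le hs.le ht.le
  obtain ⟨w, hw, hgw⟩ := (hJ.image g hg).ordConnected.uIcc_subset (mem_image_of_mem g hs)
    (mem_image_of_mem g ht) hzero
  exact hne w hw hgw

theorem exists_sameSignOn_Icc_Icc {g : ℝ → ℝ} {u v : ℝ} (huv : u ≤ v)
    (hcont : ContinuousOn g (Icc u v)) (hinj : InjOn g (Icc u v)) :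
    ∃ w ∈ Icc u v, (g w = 0 ∨ SameSignOn g (Icc u v)) ∧
      SameSignOn g (Icc u w) ∧ SameSignOn g (Icc w v) := by
  by_cases hzero : ∃ w ∈ Icc u v, g w = 0
  · obtain ⟨w, hw, hgw⟩ := hzero
    refine ⟨w, hw, Or.inl hgw, ?_⟩
    have hleft : Icc u w ⊆ Icc u v := Icc_subset_Icc_right hw.2
    have hright : Icc w v ⊆ Icc u v := Icc_subset_Icc_left hw.1
    rcases hcont.strictMonoOn_of_injOn_Icc' huv hinj with hmono | hanti
    · have hneg : ∀ s ∈ Icc u w, g s ≤ 0 := fun s hs => hgw ▸ hmono.monotoneOn (hleft hs) hw hs.2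
      have hpos : ∀ s ∈ Icc w v, 0 ≤ g s := fun s hs => hgw ▸ hmono.monotoneOn hw (hright hs) hs.1
      exact ⟨fun s hs t ht => mul_nonneg_of_nonpos_of_nonpos (hneg s hs) (hneg t ht),
        fun s hs t ht => mul_nonneg (hpos s hs) (hpos t ht)⟩
    · have hpos : ∀ s ∈ Icc u w, 0 ≤ g s := fun s hs => hgw ▸ hanti.antitoneOn (hleft hs) hw hs.2
      have hneg : ∀ s ∈ Icc w v, g s ≤ 0 := fun s hs => hgw ▸ hanti.antitoneOn hw (hright hs) hs.1
      exact ⟨fun s hs t ht => mul_nonneg (hpos s hs) (hpos t ht),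
        fun s hs t ht => mul_nonneg_of_nonpos_of_nonpos (hneg s hs) (hneg t ht)⟩
  · push Not at hzero
    have hsame := sameSignOn_of_forall_ne_zero isPreconnected_Icc hcont hzero
    exact ⟨u, left_mem_Icc.2 huv, Or.inr hsame, hsame.mono (Icc_subset_Icc_right huv), hsame⟩

end SameSign

section Cylinder

/-- A parameter cylinder of order `n` inside `[a, b]`: a subinterval `[u, v]` on which, for every
`i < n`, the `i`-th point of the critical orbit stays on one side of the critical point. -/
structure IsCylinder (a b : ℝ) (n : ℕ) (u v : ℝ) : Prop where
  le_left : a ≤ u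
  le : u ≤ v
  right_le : v ≤ b
  sameSign : ∀ i < n, SameSignOn (critOrbit i) (Icc u v)

variable {a b u v : ℝ} {m n : ℕ}

theorem IsCylinder.subset (h : IsCylinder a b n u v) : Icc u v ⊆ Icc a b :=
  Icc_subset_Icc h.le_left h.right_le

theorem IsCylinder.of_le (h : IsCylinder a b n u v) (hmn : m ≤ n) : IsCylinder a b m u v :=
  ⟨h.le_left, h.le, h.right_le, fun i hi => h.sameSign i (hi.trans_le hmn)⟩

theorem IsCylinder.left (h : IsCylinder a b n u v) {w : ℝ} (hw : w ∈ Icc u v) :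
    IsCylinder a b n u w :=
  ⟨h.le_left, hw.1, hw.2.trans h.right_le,
    fun i hi => (h.sameSign i hi).mono (Icc_subset_Icc_right hw.2)⟩

theorem IsCylinder.right (h : IsCylinder a b n u v) {w : ℝ} (hw : w ∈ Icc u v) :
    IsCylinder a b n w v :=
  ⟨h.le_left.trans hw.1, hw.2, h.right_le,
    fun i hi => (h.sameSign i hi).mono (Icc_subset_Icc_left hw.1)⟩

theorem IsCylinder.succ (h : IsCylinder a b n u v) (hn : SameSignOn (critOrbit n) (Icc u v)) :
    IsCylinder a b (n + 1) u v :=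
  ⟨h.le_left, h.le, h.right_le, fun i hi =>
    (Nat.lt_succ_iff_lt_or_eq.1 hi).elim (h.sameSign i) fun hin => hin ▸ hn⟩

theorem isCylinder_three (ha : 1 ≤ a) (hab : a ≤ b) : IsCylinder a b 3 a b := by
  refine ⟨le_rfl, hab, le_rfl, fun i hi s hs t ht => ?_⟩
  interval_cases i
  · simp [critOrbit_zero]
  · simp [critOrbit_one]
  · rw [critOrbit_two, critOrbit_two]
    exact mul_nonneg_of_nonpos_of_nonpos (by linarith [hs.1]) (by linarith [ht.1])

theorem IsCylinder.mul_abs_sub_le (ha : √2 < a) (hb : b ≤ 2) (h : IsCylinder a b (m + 3) u v)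
    {s t : ℝ} (hs : s ∈ Icc u v) (ht : t ∈ Icc u v) :
    (a ^ 2 - 2) * a ^ m * |s - t| ≤ 3 * |critOrbit (m + 3) s - critOrbit (m + 3) t| := by
  have ha₁ := one_lt_of_sqrt_two_lt ha
  have ha₂ := two_lt_sq_of_sqrt_two_lt ha
  have hat := (h.subset ht).1
  have hsq : a ^ 2 ≤ t ^ 2 := by gcongr
  have hpow : a ^ m ≤ t ^ m := by gcongr
  calc (a ^ 2 - 2) * a ^ m * |s - t| ≤ (t ^ 2 - 2) * t ^ m * |s - t| :=
      mul_le_mul_of_nonneg_right (mul_le_mul (by linarith) hpow (by positivity) (by linarith))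
        (abs_nonneg _)
    _ ≤ _ := mul_abs_sub_le_abs_critOrbit_sub
      (Icc_subset_Icc ha₁.le hb (h.subset hs)) (Icc_subset_Icc ha₁.le hb (h.subset ht))
      (by linarith) m fun i hi => h.sameSign i hi s hs t ht

theorem IsCylinder.injOn_critOrbit (ha : √2 < a) (hb : b ≤ 2) (hn : 3 ≤ n)
    (h : IsCylinder a b n u v) : InjOn (critOrbit n) (Icc u v) := by
  obtain ⟨m, rfl⟩ := Nat.exists_eq_add_of_le' hn
  intro s hs t ht hst
  have hle := h.mul_abs_sub_le ha hb hs ht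
  rw [hst, sub_self, abs_zero, mul_zero] at hle
  exact sub_eq_zero.1 (abs_nonpos_iff.1
    (nonpos_of_mul_nonpos_right hle (sq_sub_two_mul_pow_pos ha m)))

theorem IsCylinder.exists_split (ha : √2 < a) (hb : b ≤ 2) (hn : 3 ≤ n)
    (h : IsCylinder a b n u v) :
    ∃ w ∈ Icc u v, (critOrbit n w = 0 ∨ IsCylinder a b (n + 1) u v) ∧
      IsCylinder a b (n + 1) u w ∧ IsCylinder a b (n + 1) w v := by
  obtain ⟨w, hw, hsplit, hleft, hright⟩ := exists_sameSignOn_Icc_Icc h.le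
    (continuous_critOrbit n).continuousOn (h.injOn_critOrbit ha hb hn)
  exact ⟨w, hw, hsplit.imp_right h.succ, (h.left hw).succ hleft, (h.right hw).succ hright⟩

theorem IsCylinder.abs_critOrbit_sub_lt (ha : √2 < a) (hb : b ≤ 2) (h : IsCylinder a b n u v)
    (hshort : 25 * b ^ n * (v - u) < 1) {i : ℕ} (hi : i ≤ n + 2) {s t : ℝ} (hs : s ∈ Icc u v)
    (ht : t ∈ Icc u v) : |critOrbit i s - critOrbit i t| < 2 / 5 := by
  have hsqrt := seven_fifths_lt_sqrt_two
  have hab : a ≤ b := (h.subset hs).1.trans (h.subset hs).2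
  have hb₁ : 1 ≤ b := by linarith
  have hdist : |s - t| ≤ v - u := abs_sub_le_of_le_of_le hs.1 hs.2 ht.1 ht.2
  have hpow : b ^ i ≤ 4 * b ^ n :=
    calc b ^ i ≤ b ^ (n + 2) := by gcongr
      _ = b ^ 2 * b ^ n := by ring
      _ ≤ 4 * b ^ n := by gcongr; nlinarith
  have hosc : (b - 1) * |critOrbit i s - critOrbit i t| < 4 / 25 :=
    calc (b - 1) * |critOrbit i s - critOrbit i t| ≤ (b ^ i - 1) * |s - t| :=
        sub_one_mul_abs_critOrbit_sub_le hb₁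
          (Icc_subset_Icc (by linarith) hb (h.subset hs))
          (Icc_subset_Icc_left (by linarith) (h.subset ht)) i
      _ ≤ 4 * b ^ n * (v - u) :=
        mul_le_mul (by linarith) hdist (abs_nonneg _) (by positivity)
      _ < 4 / 25 := by linarith
  nlinarith [abs_nonneg (critOrbit i s - critOrbit i t)]

theorem IsCylinder.sameSignOn_critOrbit (ha : √2 < a) (hb : b ≤ 2) (h : IsCylinder a b n u v)
    (hshort : 25 * b ^ n * (v - u) < 1) {i : ℕ} (hi : i ≤ n + 2) {w : ℝ} (hw : w ∈ Icc u v)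
    (hfar : 2 / 5 ≤ |critOrbit i w|) : SameSignOn (critOrbit i) (Icc u v) :=
  SameSignOn.of_abs_sub_le (abs_pos.1 (by linarith)) fun _ hs =>
    (h.abs_critOrbit_sub_lt ha hb hshort hi hw hs).le.trans hfar

/-- After the critical orbit passes through the critical point at a parameter `w`, its next two
points are `1` and `1 - w`, too far from the critical point for another cut of a short cylinder. -/
theorem IsCylinder.exists_split_three (ha : √2 < a) (hb : b ≤ 2) (hn : 3 ≤ n)
    (h : IsCylinder a b n u v) (hshort : 25 * b ^ n * (v - u) < 1) :
    ∃ w ∈ Icc u v, IsCylinder a b (n + 3) u w ∧ IsCylinder a b (n + 3) w v := by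
  have hsqrt := seven_fifths_lt_sqrt_two
  have one_step {i : ℕ} {w : ℝ} (hi : i < n + 2) (hw : w ∈ Icc u v) (hzero : critOrbit i w = 0) :
      SameSignOn (critOrbit (i + 1)) (Icc u v) :=
    h.sameSignOn_critOrbit ha hb hshort hi hw (by norm_num [critOrbit_succ, hzero])
  have two_steps {i : ℕ} {w : ℝ} (hi : i + 1 < n + 2) (hw : w ∈ Icc u v)
      (hzero : critOrbit i w = 0) : SameSignOn (critOrbit (i + 2)) (Icc u v) := by
    refine h.sameSignOn_critOrbit ha hb hshort hi hw ?_
    have : critOrbit (i + 2) w = 1 - w := by simp [critOrbit_succ, hzero]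
    rw [this, le_abs']
    exact Or.inl (by linarith [(h.subset hw).1])
  obtain ⟨w, hw, hzero | h₁, hleft, hright⟩ := h.exists_split ha hb hn
  · have sub_left : Icc u w ⊆ Icc u v := Icc_subset_Icc_right hw.2
    have sub_right : Icc w v ⊆ Icc u v := Icc_subset_Icc_left hw.1
    have hsame := one_step (by omega) hw hzero
    have hsame' := two_steps (by omega) hw hzero
    exact ⟨w, hw, (hleft.succ (hsame.mono sub_left)).succ (hsame'.mono sub_left),
      (hright.succ (hsame.mono sub_right)).succ (hsame'.mono sub_right)⟩
  obtain ⟨w, hw, hzero | h₂, hleft, hright⟩ := h₁.exists_split ha hb (by omega)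
  · have h₂ := one_step (by omega) hw hzero
    exact ⟨w, hw, hleft.succ (h₂.mono (Icc_subset_Icc_right hw.2)),
      hright.succ (h₂.mono (Icc_subset_Icc_left hw.1))⟩
  obtain ⟨w, hw, -, hleft, hright⟩ := h₂.exists_split ha hb (by omega)
  exact ⟨w, hw, hleft, hright⟩

end Cylinder

section MassBound

/-- Every parameter cylinder of order `n` inside `[a, b]` has `μ`-mass at most `B` plus `E` times
its length. This is the estimate that a Lasota–Yorke inequality carries from order to order. -/
def MassBound (a b : ℝ) (μ : Measure ℝ) (n : ℕ) (B E : ℝ) : Prop :=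
  ∀ ⦃u v : ℝ⦄, IsCylinder a b n u v → μ.real (Icc u v) ≤ B + E * (v - u)

theorem measureReal_Icc_le_add (μ : Measure ℝ) [IsLocallyFiniteMeasure μ] {u v w : ℝ}
    (hw : w ∈ Icc u v) : μ.real (Icc u v) ≤ μ.real (Icc u w) + μ.real (Icc w v) := by
  rw [← Icc_union_Icc_eq_Icc hw.1 hw.2]
  exact measureReal_union_le _ _

variable {a b B E : ℝ} {μ : Measure ℝ} [IsLocallyFiniteMeasure μ] {n : ℕ}

theorem MassBound.double (ha : √2 < a) (hb : b ≤ 2) (hn : 3 ≤ n)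
    (h : MassBound a b μ (n + 1) B E) : MassBound a b μ n (2 * B) E := by
  intro u v huv
  obtain ⟨w, hw, -, hleft, hright⟩ := huv.exists_split ha hb hn
  linarith [measureReal_Icc_le_add μ hw, h hleft, h hright]

theorem MassBound.lasotaYorke (ha : √2 < a) (hb : b ≤ 2) (hn : 3 ≤ n) (hB : 0 ≤ B)
    (h : MassBound a b μ (n + 3) B E) :
    MassBound a b μ n (2 * B) (E + 150 * b ^ n * B) := by
  intro u v huv
  rcases lt_or_ge (25 * b ^ n * (v - u)) 1 with hshort | hlong
  · obtain ⟨w, hw, hleft, hright⟩ := huv.exists_split_three ha hb hn hshort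
    have hb₀ : 0 ≤ b := by
      linarith [one_lt_of_sqrt_two_lt ha, huv.le_left, huv.le, huv.right_le]
    have : 0 ≤ 150 * b ^ n * B * (v - u) := mul_nonneg (by positivity) (sub_nonneg.2 huv.le)
    linarith [measureReal_Icc_le_add μ hw, h hleft, h hright]
  · have hmass := ((h.double ha hb (by omega)).double ha hb (by omega)).double ha hb hn huv
    linarith [mul_le_mul_of_nonneg_left hlong hB]

/-- The constants solve the recursion given by the Lasota–Yorke inequality. The number of pieces
doubles only once in three steps, so the growth rate `b ^ 3 ≥ 8 / 3` of long pieces dominates. -/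
theorem MassBound.iterate (ha : √2 < a) (hab : a ≤ b) (hb : b ≤ 2) {κ : ℝ} (hκ : 0 ≤ κ) {q : ℕ}
    (hn : 3 ≤ n) (h : MassBound a b μ (n + 3 * q) κ 0) :
    MassBound a b μ n (2 ^ q * κ) (225 * κ * (b ^ (n + 3 * q) - 2 ^ q * b ^ n)) := by
  induction q generalizing n with
  | zero => simpa using h
  | succ q ih =>
    have hcube : 8 / 3 ≤ b ^ 3 :=
      calc (8 / 3 : ℝ) ≤ (7 / 5) ^ 3 := by norm_num
        _ ≤ b ^ 3 := by gcongr; linarith [seven_fifths_lt_sqrt_two]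
    have hb₀ : 0 ≤ b := by linarith [one_lt_of_sqrt_two_lt ha]
    have hgrowth : 0 ≤ 2 ^ q * κ * b ^ n * (b ^ 3 - 8 / 3) :=
      mul_nonneg (by positivity) (sub_nonneg.2 hcube)
    rw [show n + 3 * (q + 1) = n + 3 + 3 * q by ring] at h
    intro u v huv
    refine ((ih (by omega) h).lasotaYorke ha hb hn (by positivity) huv).trans ?_
    rw [show n + 3 * (q + 1) = n + 3 + 3 * q by ring, pow_succ' 2 q, mul_assoc 2, pow_add b n 3]
    refine add_le_add_right (mul_le_mul_of_nonneg_right ?_ (sub_nonneg.2 huv.le)) _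
    linarith

theorem MassBound.measureReal_Icc_le (ha : √2 < a) (hab : a ≤ b) (hb : b ≤ 2) {κ : ℝ} (hκ : 0 ≤ κ)
    {q : ℕ} (h : MassBound a b μ (3 + 3 * q) κ 0) :
    μ.real (Icc a b) ≤ 226 * κ * b ^ (3 + 3 * q) := by
  have ha₁ := one_lt_of_sqrt_two_lt ha
  have hb₁ : 1 ≤ b := by linarith
  have hcube : 2 ≤ b ^ 3 := by nlinarith [two_lt_sq_of_sqrt_two_lt ha, mul_self_nonneg b]
  have hpow : 2 ^ q ≤ b ^ (3 + 3 * q) :=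
    calc (2 : ℝ) ^ q ≤ (b ^ 3) ^ q := by gcongr
      _ ≤ b ^ (3 + 3 * q) := by rw [← pow_mul]; gcongr; omega
  have hmass := h.iterate ha hab hb hκ le_rfl (isCylinder_three ha₁.le hab)
  calc μ.real (Icc a b)
      ≤ 2 ^ q * κ + 225 * κ * (b ^ (3 + 3 * q) - 2 ^ q * b ^ 3) * (b - a) := hmass
    _ ≤ b ^ (3 + 3 * q) * κ + 225 * κ * b ^ (3 + 3 * q) * 1 := by
      have hba : b - a ≤ 1 := by linarith
      have : 0 ≤ b - a := sub_nonneg.2 hab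
      gcongr
      exact sub_le_self _ (by positivity)
    _ = 226 * κ * b ^ (3 + 3 * q) := by ring

end MassBound

section Measure

variable {a b : ℝ} {n : ℕ}

theorem IsCylinder.measureReal_abs_critOrbit_lt_le (ha : √2 < a) (hb : b ≤ 2) {m : ℕ} {u v r : ℝ}
    (hr : 0 ≤ r) (h : IsCylinder a b (m + 3) u v) :
    volume.real ({s | |critOrbit (m + 3) s| < r} ∩ Icc u v) ≤
      6 * r / ((a ^ 2 - 2) * a ^ m) := by
  have hcoeff := sq_sub_two_mul_pow_pos ha m
  have hdiam : volume ({s | |critOrbit (m + 3) s| < r} ∩ Icc u v) ≤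
      ENNReal.ofReal (6 * r / ((a ^ 2 - 2) * a ^ m)) := by
    refine (Real.volume_le_diam _).trans (Metric.ediam_le fun s hs t ht => ?_)
    rw [edist_dist, Real.dist_eq]
    refine ENNReal.ofReal_le_ofReal ((le_div_iff₀' hcoeff).2 ?_)
    have hs' : |critOrbit (m + 3) s| < r := hs.1
    have ht' : |critOrbit (m + 3) t| < r := ht.1
    linarith [h.mul_abs_sub_le ha hb hs.2 ht.2,
      abs_sub (critOrbit (m + 3) s) (critOrbit (m + 3) t)]
  exact ENNReal.toReal_le_of_le_ofReal (by positivity) hdiam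

theorem exists_forall_measureReal_abs_critOrbit_lt_le (ha : √2 < a) (hab : a ≤ b) (hb : b ≤ 2) :
    ∃ C : ℝ, ∀ n, 3 ≤ n → ∀ r, 0 ≤ r →
      volume.real ({s | |critOrbit n s| < r} ∩ Icc a b) ≤ C * (r * (b / a) ^ n) := by
  have ha₁ := one_lt_of_sqrt_two_lt ha
  have ha₂ := two_lt_sq_of_sqrt_two_lt ha
  have : 0 < a := by linarith
  have hb₁ : 1 ≤ b := by linarith
  have hgap : 0 < a ^ 2 - 2 := by linarith
  refine ⟨1356 * a ^ 3 * b ^ 2 / (a ^ 2 - 2), fun n hn r hr => ?_⟩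
  obtain ⟨m, rfl⟩ := Nat.exists_eq_add_of_le' hn
  set S := {s | |critOrbit (m + 3) s| < r}
  have hbound : MassBound a b (volume.restrict S) (3 + 3 * ((m + 2) / 3))
      (6 * r / ((a ^ 2 - 2) * a ^ m)) 0 := fun u v h => by
    rw [zero_mul, add_zero, measureReal_restrict_apply measurableSet_Icc, inter_comm]
    exact (h.of_le (by omega)).measureReal_abs_critOrbit_lt_le ha hb hr
  calc volume.real (S ∩ Icc a b) = (volume.restrict S).real (Icc a b) := by
        rw [measureReal_restrict_apply measurableSet_Icc, inter_comm]
    _ ≤ 226 * (6 * r / ((a ^ 2 - 2) * a ^ m)) * b ^ (3 + 3 * ((m + 2) / 3)) :=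
        hbound.measureReal_Icc_le ha hab hb (by positivity)
    _ ≤ 226 * (6 * r / ((a ^ 2 - 2) * a ^ m)) * b ^ (m + 3 + 2) := by
        gcongr ?_ * ?_
        exact pow_le_pow_right₀ hb₁ (by omega)
    _ = 1356 * a ^ 3 * b ^ 2 / (a ^ 2 - 2) * (r * (b / a) ^ (m + 3)) := by
        rw [div_pow]
        field_simp
        ring

theorem ae_eventually_pow_le_abs_critOrbit_of_mem_Icc (ha : √2 < a) (hab : a ≤ b) (hb : b ≤ 2)
    {ρ : ℝ} (hρ : 0 ≤ ρ) (hρb : ρ * b < a) :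
    ∀ᵐ s, s ∈ Icc a b → ∀ᶠ n in atTop, ρ ^ n ≤ |critOrbit n s| := by
  have ha₀ : 0 < a := by linarith [one_lt_of_sqrt_two_lt ha]
  have hratio₀ : 0 ≤ ρ * (b / a) := by have := ha₀.trans_le hab; positivity
  have hratio₁ : ρ * (b / a) < 1 := by rwa [← mul_div_assoc, div_lt_one ha₀]
  obtain ⟨C, hC⟩ := exists_forall_measureReal_abs_critOrbit_lt_le ha hab hb
  set S : ℕ → Set ℝ := fun n => {s | |critOrbit n s| < ρ ^ n} ∩ Icc a b
  have hfinite (n : ℕ) : volume (S n) ≠ ⊤ :=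
    measure_ne_top_of_subset inter_subset_right measure_Icc_lt_top.ne
  have hsummable : Summable fun n => volume.real (S n) := by
    refine Summable.of_norm_bounded_eventually_nat
      ((summable_geometric_of_lt_one hratio₀ hratio₁).mul_left C) ?_
    filter_upwards [eventually_ge_atTop 3] with n hn
    rw [Real.norm_of_nonneg measureReal_nonneg, mul_pow]
    exact hC n hn (ρ ^ n) (pow_nonneg hρ n)
  have hsum : ∑' n, volume (S n) ≠ ⊤ := by
    have := hsummable.tsum_ofReal_ne_top
    simpa only [ofReal_measureReal (hfinite _)] using this
  filter_upwards [ae_eventually_notMem hsum] with s hs hsab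
  filter_upwards [hs] with n hn
  exact not_lt.1 fun hlt => hn ⟨hlt, hsab⟩

theorem ae_eventually_pow_le_abs_critOrbit {ρ : ℝ} (hρ : ρ ∈ Ioo (0 : ℝ) 1) :
    ∀ᵐ s, s ∈ Ioc √2 2 → ∀ᶠ n in atTop, ρ ^ n ≤ |critOrbit n s| := by
  refine measure_null_of_locally_null _ fun x hx => ?_
  obtain ⟨⟨hx₁, hx₂⟩, -⟩ := Classical.not_imp.1 hx
  have hx₀ : 0 < x := by linarith [one_lt_of_sqrt_two_lt hx₁]
  obtain ⟨a, hmax, hax⟩ := exists_between (max_lt hx₁ (mul_lt_of_lt_one_left hx₀ hρ.2))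
  obtain ⟨ha, hρx⟩ := max_lt_iff.1 hmax
  obtain ⟨b, hxb, hba⟩ := exists_between ((lt_div_iff₀' hρ.1).2 hρx)
  have hρb : ρ * min b 2 < a :=
    (mul_le_mul_of_nonneg_left (min_le_left b 2) hρ.1.le).trans_lt ((lt_div_iff₀' hρ.1).1 hba)
  refine ⟨_, ?_, ae_eventually_pow_le_abs_critOrbit_of_mem_Icc ha (hax.le.trans (le_min hxb.le hx₂))
    (min_le_right b 2) hρ.1.le hρb⟩
  filter_upwards [self_mem_nhdsWithin, mem_nhdsWithin_of_mem_nhds (Icc_mem_nhds hax hxb)]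
    with s hs hsab himp
  exact hs fun hs₂ => himp ⟨hsab.1, le_min hsab.2 hs₂.2⟩

theorem ae_tentSlowlyRecurrent : ∀ᵐ s, s ∈ Ioc √2 2 → TentSlowlyRecurrent s := by
  have hall : ∀ᵐ s, ∀ q : ℚ, (q : ℝ) ∈ Ioo (0 : ℝ) 1 → s ∈ Ioc √2 2 →
      ∀ᶠ n in atTop, (q : ℝ) ^ n ≤ |critOrbit n s| :=
    ae_all_iff.2 fun q => by
      by_cases hq : (q : ℝ) ∈ Ioo (0 : ℝ) 1
      · filter_upwards [ae_eventually_pow_le_abs_critOrbit hq] with s hs _ using hs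
      · exact .of_forall fun _ hq' => absurd hq' hq
  filter_upwards [hall] with s hs hs₂
  exact tentSlowlyRecurrent_of_critOrbit (one_lt_of_sqrt_two_lt hs₂.1) fun q hq => hs q hq hs₂

end Measure

/-- First part of Theorem F: for Lebesgue-almost every parameter s ∈ [√2,2],
the tent map f_s does not have standard shadowing with accuracy L·ε^α for any
L > 0 and α ∈ (0,1). -/
theorem tent_map_ae_no_holder_shadowing :
    volume (Icc (Real.sqrt 2) 2 \
      {s : ℝ | ∀ L > (0 : ℝ), ∀ α ∈ Ioo (0 : ℝ) 1,
        ¬ TentHasShadowingWithAccuracy s (fun ε => L * ε ^ α)}) = 0 := by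
  rw [measure_eq_zero_iff_ae_notMem]
  filter_upwards [ae_tentSlowlyRecurrent, volume.ae_ne √2, volume.ae_ne 2]
    with s hslow hs_sqrt hs_two
  rintro ⟨⟨hs₁, hs₂⟩, hs⟩
  have hs₁ : √2 < s := hs₁.lt_of_ne' hs_sqrt
  exact hs fun L _ α hα => (hslow ⟨hs₁, hs₂⟩).not_tentHasShadowingWithAccuracy
    (one_lt_of_sqrt_two_lt hs₁) (hs₂.lt_of_ne hs_two) L hα.1
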